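/- arXiv:2307.00946 — 8 statements merged into one kernel-verified Lean document; each statement's English description precedes it below -/
import Mathlib

section
/- Let H be a complex Hilbert space and let S and T be densely defined skew-selfadjoint operators on H. Then the range of S is contained in the kernel of T if and only if the range of T is contained in the kernel of S. (In particular, the condition defining an annihilating pair of skew-selfadjoint operators is symmetric.) -/
noncomputable section

open LinearPMap

/-- The range `{S x : x ∈ dom S}` of a partially defined linear operator. -/
def pRan {E F : Type*} [NormedAddCommGroup E] [NormedAddCommGroup F]
    [InnerProductSpace ℂ E] [InnerProductSpace ℂ F] (S : E →ₗ.[ℂ] F) : Set F :=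
  Set.range fun x : S.domain => S x

/-- The kernel `{x ∈ dom S : S x = 0}` of a partially defined linear operator. -/
def pKer {E F : Type*} [NormedAddCommGroup E] [NormedAddCommGroup F]
    [InnerProductSpace ℂ E] [InnerProductSpace ℂ F] (S : E →ₗ.[ℂ] F) : Set E :=
  {x | ∃ hx : x ∈ S.domain, S ⟨x, hx⟩ = 0}

theorem annih_aux {H : Type*} [NormedAddCommGroup H] [InnerProductSpace ℂ H]
    [CompleteSpace H] (S T : H →ₗ.[ℂ] H)
    (hSdense : Dense (S.domain : Set H)) (hTdense : Dense (T.domain : Set H))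
    (hSskew : S.adjoint = -S) (hTskew : T.adjoint = -T)
    (h : pRan S ⊆ pKer T) : pRan T ⊆ pKer S := by
  rintro _ ⟨u, rfl⟩
  have key : ∀ x : S.domain, inner ℂ (0 : H) (x : H) = inner ℂ (T u) (S x) := by
    intro x
    obtain ⟨hx, hx0⟩ := h ⟨x, rfl⟩
    have hf := adjoint_isFormalAdjoint hTdense
    rw [hTskew] at hf
    have h1 := hf ⟨S x, hx⟩ u
    simp only [LinearPMap.neg_apply] at h1
    have h2 : inner ℂ (S x) (T u) = 0 := by
      rw [← h1]
      erw [hx0]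
      simp
    rw [inner_zero_left, inner_eq_zero_symm.mp h2]
  have hm : T u ∈ S.adjoint.domain := mem_adjoint_domain_of_exists _ ⟨0, key⟩
  have h0 := adjoint_apply_eq hSdense ⟨T u, hm⟩ key
  have hm' : T u ∈ (-S).domain := hSskew ▸ hm
  have h3 : (-S) ⟨T u, hm'⟩ = 0 := by
    rw [← h0]
    exact ((LinearPMap.ext_iff.mp hSskew).2 (x := T u) (hf := hm) (hg := hm')).symm
  refine ⟨hm', ?_⟩
  rw [LinearPMap.neg_apply] at h3
  exact neg_eq_zero.mp h3

/-- for densely defined skew-selfadjoint operators `S`, `T` on a complex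
Hilbert space `H`, `ran S ⊆ ker T` iff `ran T ⊆ ker S`. -/
theorem annihilating_symm {H : Type*} [NormedAddCommGroup H] [InnerProductSpace ℂ H]
    [CompleteSpace H] (S T : H →ₗ.[ℂ] H)
    (hSdense : Dense (S.domain : Set H)) (hTdense : Dense (T.domain : Set H))
    (hSskew : S.adjoint = -S) (hTskew : T.adjoint = -T) :
    pRan S ⊆ pKer T ↔ pRan T ⊆ pKer S := by
  exact ⟨annih_aux S T hSdense hTdense hSskew hTskew, annih_aux T S hTdense hSdense hTskew hSskew⟩
end
end

section
/- Generalized Helmholtz decomposition: Let H be a complex Hilbert space and let S₁, …, S_N be an annihilating set of skew-selfadjoint operators on H, i.e. each S_i is densely defined and skew-selfadjoint and ran(S_i) ⊆ ker(S_j) for all i ≠ j. Set K := ⋂_{i=1}^{N} ker(S_i). Then the closed subspaces K, closure(ran(S₁)), …, closure(ran(S_N)) are pairwise orthogonal and H is their orthogonal direct sum: H = K ⊕ closure(ran(S₁)) ⊕ ⋯ ⊕ closure(ran(S_N)). -/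
noncomputable section

open LinearPMap
open scoped ComplexInnerProductSpace

/-- The kernel of a partially defined linear operator, as a submodule of the ambient space. -/
def kerSub {E F : Type*} [NormedAddCommGroup E] [NormedAddCommGroup F]
    [InnerProductSpace ℂ E] [InnerProductSpace ℂ F] (S : E →ₗ.[ℂ] F) : Submodule ℂ E :=
  (LinearMap.ker S.toFun).map S.domain.subtype

/-- The closure of the range of a partially defined linear operator. -/
def ranClos {E F : Type*} [NormedAddCommGroup E] [NormedAddCommGroup F]
    [InnerProductSpace ℂ E] [InnerProductSpace ℂ F] (S : E →ₗ.[ℂ] F) : Submodule ℂ F :=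
  (LinearMap.range S.toFun).topologicalClosure

lemma kerSub_eq_orth {H : Type*} [NormedAddCommGroup H] [InnerProductSpace ℂ H]
    [CompleteSpace H] (S : H →ₗ.[ℂ] H) (hd : Dense (S.domain : Set H))
    (hs : S.adjoint = -S) : kerSub S = (ranClos S)ᗮ := by
  unfold ranClos
  rw [Submodule.orthogonal_closure]
  have hle : ∀ y (hy : y ∈ S.domain) (hy' : y ∈ S.adjoint.domain),
      S.adjoint ⟨y, hy'⟩ = - S ⟨y, hy⟩ := by
    rw [hs]
    intro y hy hy'
    rfl
  have hdom : S.adjoint.domain = S.domain := by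
    rw [hs]
    rfl
  ext y
  rw [Submodule.mem_orthogonal']
  constructor
  · rintro ⟨⟨y', hy⟩, hk, rfl⟩ _ ⟨x, rfl⟩
    have hk' : S ⟨y', hy⟩ = 0 := hk
    have h := LinearPMap.adjoint_isFormalAdjoint hd ⟨y', hdom ▸ hy⟩ x
    rw [hle y' hy, hk', neg_zero, inner_zero_left] at h
    exact h.symm
  · intro h
    have h0 : ∀ x : S.domain, ⟪(0 : H), (x : H)⟫ = ⟪y, S x⟫ := fun x => by
      rw [inner_zero_left]
      exact (h _ ⟨x, rfl⟩).symm
    have hy' : y ∈ S.adjoint.domain := LinearPMap.mem_adjoint_domain_of_exists y ⟨0, h0⟩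
    have hy : y ∈ S.domain := hdom ▸ hy'
    have h1 := LinearPMap.adjoint_apply_eq hd ⟨y, hy'⟩ h0
    rw [hle y hy, neg_eq_zero] at h1
    exact ⟨⟨y, hy⟩, h1, rfl⟩

/-- generalized Helmholtz decomposition: for an annihilating set
`S 0, …, S (N-1)` of densely defined skew-selfadjoint operators on a complex Hilbert space `H`,
the subspaces `K := ⋂ ker (S i)`, `closure (ran (S 0))`, …, `closure (ran (S (N-1)))` are
pairwise orthogonal and their (internal orthogonal direct) sum is all of `H`. -/
theorem generalized_helmholtz {H : Type*} [NormedAddCommGroup H] [InnerProductSpace ℂ H]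
    [CompleteSpace H] {N : ℕ} (S : Fin N → (H →ₗ.[ℂ] H))
    (hdense : ∀ i, Dense ((S i).domain : Set H))
    (hskew : ∀ i, (S i).adjoint = -(S i))
    (hannih : ∀ i j, i ≠ j → ∀ x : (S i).domain, ((S i) x) ∈ kerSub (S j))
    (V : Option (Fin N) → Submodule ℂ H)
    (hVK : V none = ⨅ i, kerSub (S i))
    (hVran : ∀ i, V (some i) = ranClos (S i)) :
    (∀ o₁ o₂, o₁ ≠ o₂ → ∀ x ∈ V o₁, ∀ y ∈ V o₂, ⟪x, y⟫ = 0) ∧ (⨆ o, V o) = ⊤ := by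
  have hker : ∀ i, kerSub (S i) = (V (some i))ᗮ := fun i => by
    rw [hVran]
    exact kerSub_eq_orth (S i) (hdense i) (hskew i)
  have hcl : ∀ i, IsClosed (V (some i) : Set H) := fun i => by
    rw [hVran]
    exact Submodule.isClosed_topologicalClosure _
  have hle : ∀ i j, i ≠ j → V (some i) ≤ (V (some j))ᗮ := fun i j hij => by
    rw [hVran i]
    refine Submodule.topologicalClosure_minimal _ ?_ (Submodule.isClosed_orthogonal _)
    rintro _ ⟨x, rfl⟩
    rw [← hker]
    exact hannih i j hij x
  have hK : ∀ i, V none ≤ (V (some i))ᗮ := fun i => by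
    rw [hVK, ← hker]
    exact iInf_le _ i
  constructor
  · rintro (_ | i) (_ | j) hne x hx y hy
    · exact absurd rfl hne
    · exact (Submodule.mem_orthogonal' _ _).1 (hK j hx) y hy
    · exact (Submodule.mem_orthogonal _ _).1 (hK i hy) x hx
    · exact (Submodule.mem_orthogonal' _ _).1 (hle i j (fun h => hne (by rw [h])) hx) y hy
  · have : ∀ i, CompleteSpace (V (some i)) := fun i => (hcl i).completeSpace_coe
    rw [eq_top_iff]
    rintro x -
    have hsum : ∑ i, (V (some i)).starProjection x ∈ ⨆ o, V o :=
      Submodule.sum_mem _ fun i _ =>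
        Submodule.mem_iSup_of_mem (some i) (Submodule.starProjection_apply_mem _ x)
    have hdiff : x - ∑ i, (V (some i)).starProjection x ∈ V none := by
      rw [hVK, Submodule.mem_iInf]
      intro j
      rw [hker, ← Finset.add_sum_erase _ _ (Finset.mem_univ j), ← sub_sub]
      refine Submodule.sub_mem _ (Submodule.sub_starProjection_mem_orthogonal x) ?_
      exact Submodule.sum_mem _ fun i hi =>
        hle i j (Finset.ne_of_mem_erase hi) (Submodule.starProjection_apply_mem _ x)
    have := Submodule.add_mem _ (Submodule.mem_iSup_of_mem (p := V) none hdiff) hsum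
    rwa [sub_add_cancel] at this
end
end

section
/- Let H₁ and H₂ be complex Hilbert spaces and let a : dom(a) ⊆ H₁ → H₂ be a closed densely defined linear operator with adjoint a* : dom(a*) ⊆ H₂ → H₁. On the Hilbert space H := H₁ ×₂ H₂ (the product with the ℓ²-norm), define the operator S with domain dom(S) := dom(a) × dom(a*) by S(x, y) := (−a* y, a x). Then S is skew-selfadjoint, i.e. S* = −S. -/
noncomputable section

open LinearPMap

theorem mem_graph_of_adjoint_pairing {H₁ H₂ : Type*}
    [NormedAddCommGroup H₁] [InnerProductSpace ℂ H₁] [CompleteSpace H₁]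
    [NormedAddCommGroup H₂] [InnerProductSpace ℂ H₂] [CompleteSpace H₂]
    (a : H₁ →ₗ.[ℂ] H₂) (hadense : Dense (a.domain : Set H₁)) (haclosed : a.IsClosed)
    (u : H₁) (v : H₂)
    (h : ∀ y : a.adjoint.domain, inner ℂ (y : H₂) v = inner ℂ (a.adjoint y) u) :
    (u, v) ∈ a.graph := by
  let G : Submodule ℂ (WithLp 2 (H₁ × H₂)) :=
    a.graph.comap (WithLp.linearEquiv 2 ℂ (H₁ × H₂)).toLinearMap
  have hG : IsClosed (G : Set (WithLp 2 (H₁ × H₂))) :=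
    IsClosed.preimage (WithLp.prod_continuous_ofLp 2 H₁ H₂) haclosed
  have : CompleteSpace G := hG.completeSpace_coe
  have hmem : WithLp.toLp 2 (u, v) ∈ Gᗮᗮ := by
    rw [Submodule.mem_orthogonal]
    intro w hw
    have hx : ∀ x : a.domain, inner ℂ (-w.fst) (x : H₁) = inner ℂ w.snd (a x) := by
      intro x
      have h1 : WithLp.toLp 2 ((x : H₁), a x) ∈ G := a.mem_graph x
      have h2 := (Submodule.mem_orthogonal' G w).1 hw _ h1
      simp only [WithLp.prod_inner_apply] at h2
      rw [inner_neg_left]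
      exact neg_eq_of_add_eq_zero_right h2
    have hq : w.snd ∈ a.adjoint.domain := mem_adjoint_domain_of_exists _ ⟨_, hx⟩
    have he := adjoint_apply_eq hadense ⟨w.snd, hq⟩ hx
    have h3 := h ⟨w.snd, hq⟩
    rw [he, inner_neg_left] at h3
    simp only [WithLp.prod_inner_apply]
    change inner ℂ w.fst u + inner ℂ w.snd v = 0
    rw [h3]; ring
  rw [Submodule.orthogonal_orthogonal] at hmem
  exact hmem

theorem dense_adjoint_domain {H₁ H₂ : Type*}
    [NormedAddCommGroup H₁] [InnerProductSpace ℂ H₁] [CompleteSpace H₁]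
    [NormedAddCommGroup H₂] [InnerProductSpace ℂ H₂] [CompleteSpace H₂]
    (a : H₁ →ₗ.[ℂ] H₂) (hadense : Dense (a.domain : Set H₁)) (haclosed : a.IsClosed) :
    Dense (a.adjoint.domain : Set H₂) := by
  rw [Submodule.dense_iff_topologicalClosure_eq_top, Submodule.topologicalClosure_eq_top_iff,
    Submodule.eq_bot_iff]
  intro v hv
  have := mem_graph_of_adjoint_pairing a hadense haclosed 0 v (fun y => by
    rw [inner_zero_right]; exact (Submodule.mem_orthogonal _ v).1 hv _ y.2)
  exact a.graph_fst_eq_zero_snd this rfl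

/-- if `a : dom(a) ⊆ H₁ → H₂` is a closed densely defined operator between complex
Hilbert spaces, then the operator `S (x, y) := (−a* y, a x)` with domain `dom(a) × dom(a*)` on
the ℓ²-product `H₁ ×₂ H₂` is skew-selfadjoint, `S* = −S`. -/
theorem skewAdjoint_of_block {H₁ H₂ : Type*}
    [NormedAddCommGroup H₁] [InnerProductSpace ℂ H₁] [CompleteSpace H₁]
    [NormedAddCommGroup H₂] [InnerProductSpace ℂ H₂] [CompleteSpace H₂]
    (a : H₁ →ₗ.[ℂ] H₂) (hadense : Dense (a.domain : Set H₁)) (haclosed : a.IsClosed)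
    (S : WithLp 2 (H₁ × H₂) →ₗ.[ℂ] WithLp 2 (H₁ × H₂))
    (hdom : ∀ z : WithLp 2 (H₁ × H₂), z ∈ S.domain ↔
      (WithLp.equiv 2 (H₁ × H₂) z).1 ∈ a.domain ∧
      (WithLp.equiv 2 (H₁ × H₂) z).2 ∈ a.adjoint.domain)
    (hact : ∀ (z : S.domain)
      (h1 : (WithLp.equiv 2 (H₁ × H₂) z.1).1 ∈ a.domain)
      (h2 : (WithLp.equiv 2 (H₁ × H₂) z.1).2 ∈ a.adjoint.domain),
      WithLp.equiv 2 (H₁ × H₂) (S z) =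
        (-(a.adjoint ⟨(WithLp.equiv 2 (H₁ × H₂) z.1).2, h2⟩),
          a ⟨(WithLp.equiv 2 (H₁ × H₂) z.1).1, h1⟩)) :
    S.adjoint = -S := by
  have had := dense_adjoint_domain a hadense haclosed
  have hS : Dense (S.domain : Set (WithLp 2 (H₁ × H₂))) := by
    have h := (hadense.prod had).preimage
      (WithLp.homeomorphProd 2 H₁ H₂).isOpenMap
    convert h using 1
    ext z
    exact hdom z
  have hfa := adjoint_isFormalAdjoint hadense
  have hS1 : ∀ (z : S.domain) (h2 : z.1.snd ∈ a.adjoint.domain),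
      (S z).fst = -(a.adjoint ⟨z.1.snd, h2⟩) := fun z h2 =>
    congrArg Prod.fst (hact z ((hdom z.1).1 z.2).1 h2)
  have hS2 : ∀ (z : S.domain) (h1 : z.1.fst ∈ a.domain),
      (S z).snd = a ⟨z.1.fst, h1⟩ := fun z h1 =>
    congrArg Prod.snd (hact z h1 ((hdom z.1).1 z.2).2)
  have hform : S.IsFormalAdjoint (-S) := by
    intro x y
    have hx1 : x.1.fst ∈ a.domain := ((hdom x.1).1 x.2).1
    have hx2 : x.1.snd ∈ a.adjoint.domain := ((hdom x.1).1 x.2).2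
    have hy1 : y.1.fst ∈ a.domain := ((hdom y.1).1 y.2).1
    have hy2 : y.1.snd ∈ a.adjoint.domain := ((hdom y.1).1 y.2).2
    have e1 := hfa ⟨_, hx2⟩ ⟨_, hy1⟩
    have e2 := hfa.symm ⟨_, hx1⟩ ⟨_, hy2⟩
    rw [LinearPMap.neg_apply, inner_neg_right]
    simp only [WithLp.prod_inner_apply]
    change inner ℂ (S x).fst y.1.fst + inner ℂ (S x).snd y.1.snd =
      -(inner ℂ x.1.fst (S y).fst + inner ℂ x.1.snd (S y).snd)
    rw [hS1 x hx2, hS2 x hx1, hS1 y hy2, hS2 y hy1, inner_neg_left, inner_neg_right]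
    change inner ℂ _ y.1.fst = inner ℂ x.1.snd _ at e1
    change inner ℂ _ y.1.snd = inner ℂ x.1.fst _ at e2
    rw [e1, e2]
    ring
  have hle := hform.le_adjoint hS
  refine (eq_of_le_of_domain_eq hle (le_antisymm hle.1 ?_)).symm
  intro z hz
  have hw := adjoint_isFormalAdjoint hS ⟨z, hz⟩
  generalize S.adjoint ⟨z, hz⟩ = w at hw
  change z ∈ S.domain
  rw [hdom]
  constructor
  · have hg : (z.fst, -w.snd) ∈ a.graph := by
      apply mem_graph_of_adjoint_pairing a hadense haclosed
      intro y
      have hm : WithLp.toLp 2 ((0 : H₁), (y : H₂)) ∈ S.domain :=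
        (hdom _).2 ⟨a.domain.zero_mem, y.2⟩
      have h := hw ⟨_, hm⟩
      simp only [WithLp.prod_inner_apply] at h
      change inner ℂ w.fst (0 : H₁) + inner ℂ w.snd (y : H₂) =
        inner ℂ z.fst (S ⟨_, hm⟩).fst + inner ℂ z.snd (S ⟨_, hm⟩).snd at h
      have e2 : (S ⟨_, hm⟩).snd = 0 := (hS2 ⟨_, hm⟩ a.domain.zero_mem).trans a.map_zero
      have e1 : (S ⟨_, hm⟩).fst = -(a.adjoint y) := hS1 ⟨_, hm⟩ y.2
      rw [e1, e2, inner_zero_right, inner_zero_right, inner_neg_right, zero_add, add_zero] at h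
      rw [inner_neg_right, ← inner_conj_symm, h, _root_.map_neg, inner_conj_symm, neg_neg]
    exact mem_domain_of_mem_graph hg
  · refine mem_adjoint_domain_of_exists _ ⟨w.fst, fun x => ?_⟩
    have hm : WithLp.toLp 2 ((x : H₁), (0 : H₂)) ∈ S.domain :=
      (hdom _).2 ⟨x.2, a.adjoint.domain.zero_mem⟩
    have h := hw ⟨_, hm⟩
    simp only [WithLp.prod_inner_apply] at h
    change inner ℂ w.fst (x : H₁) + inner ℂ w.snd (0 : H₂) =
      inner ℂ z.fst (S ⟨_, hm⟩).fst + inner ℂ z.snd (S ⟨_, hm⟩).snd at h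
    have e2 : (S ⟨_, hm⟩).snd = a x := hS2 ⟨_, hm⟩ x.2
    have e1 : (S ⟨_, hm⟩).fst = 0 := by
      rw [hS1 ⟨_, hm⟩ a.adjoint.domain.zero_mem, neg_eq_zero]
      exact a.adjoint.map_zero
    rw [e1, e2, inner_zero_right, inner_zero_right, zero_add, add_zero] at h
    exact h
end
end

section
/- Let H be a complex Hilbert space and S : dom(S) ⊆ H → H a densely defined skew-selfadjoint operator such that the embedding dom(S) ↪ H is compact, i.e. every sequence (xₙ) in dom(S) with (‖xₙ‖) and (‖S xₙ‖) bounded has a subsequence converging in H. Then ran(S) is closed in H and H decomposes orthogonally as H = ran(S) ⊕ ker(S). -/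
noncomputable section

open LinearPMap
open scoped ComplexInnerProductSpace

/-- The range of a partially defined linear operator, as a submodule. -/
def ranSub {E F : Type*} [NormedAddCommGroup E] [NormedAddCommGroup F]
    [InnerProductSpace ℂ E] [InnerProductSpace ℂ F] (S : E →ₗ.[ℂ] F) : Submodule ℂ F :=
  LinearMap.range S.toFun

/-- Membership in the graph via testing: this is where skew-selfadjointness enters. -/
theorem mem_graph_iff_test {H : Type*} [NormedAddCommGroup H] [InnerProductSpace ℂ H]
    [CompleteSpace H] (S : H →ₗ.[ℂ] H)
    (hdense : Dense (S.domain : Set H)) (hskew : S.adjoint = -S) (y w : H) :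
    (y, w) ∈ S.graph ↔ ∀ x : S.domain, ⟪w, (x : H)⟫ = -⟪y, S x⟫ := by
  have hdom : S.adjoint.domain = S.domain := by rw [hskew]; rfl
  have hval : ∀ (y : H) (h1 : y ∈ S.adjoint.domain) (h2 : y ∈ S.domain),
      S.adjoint ⟨y, h1⟩ = - S ⟨y, h2⟩ := by
    rw [hskew]; intro y h1 h2; rfl
  constructor
  · intro h x
    rw [LinearPMap.mem_graph_iff] at h
    obtain ⟨z, hz, hw⟩ := h
    simp only at hz hw
    have h1 : (z : H) ∈ S.adjoint.domain := by rw [hdom]; exact z.2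
    have h2 := LinearPMap.adjoint_isFormalAdjoint hdense ⟨z, h1⟩ x
    rw [hval z h1 z.2] at h2
    rw [← hz, ← hw]
    simp only [Subtype.coe_eta, inner_neg_left] at h2
    rw [← h2, neg_neg]
  · intro h
    have h' : ∀ x : S.domain, ⟪-w, (x : H)⟫ = ⟪y, S x⟫ := by
      intro x; rw [inner_neg_left, h x, neg_neg]
    have h1 := LinearPMap.mem_adjoint_domain_of_exists (T := S) y ⟨-w, h'⟩
    have h2 : y ∈ S.domain := by rw [← hdom]; exact h1
    have h3 := LinearPMap.adjoint_apply_eq hdense ⟨y, h1⟩ h'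
    rw [hval y h1 h2] at h3
    rw [LinearPMap.mem_graph_iff]
    exact ⟨⟨y, h2⟩, rfl, neg_injective h3⟩

theorem graph_closed_aux {H : Type*} [NormedAddCommGroup H] [InnerProductSpace ℂ H]
    [CompleteSpace H] (S : H →ₗ.[ℂ] H)
    (hdense : Dense (S.domain : Set H)) (hskew : S.adjoint = -S)
    (x w : ℕ → H) (l m : H) (h : ∀ n, (x n, w n) ∈ S.graph)
    (hx : Filter.Tendsto x Filter.atTop (nhds l)) (hw : Filter.Tendsto w Filter.atTop (nhds m)) :
    (l, m) ∈ S.graph := by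
  rw [mem_graph_iff_test S hdense hskew]
  intro z
  have h1 : Filter.Tendsto (fun n => ⟪w n, (z : H)⟫) Filter.atTop (nhds ⟪m, (z : H)⟫) :=
    hw.inner tendsto_const_nhds
  have h2 : Filter.Tendsto (fun n => -⟪x n, S z⟫) Filter.atTop (nhds (-⟪l, S z⟫)) :=
    (hx.inner tendsto_const_nhds).neg
  refine tendsto_nhds_unique h1 (h2.congr fun n => ?_)
  exact ((mem_graph_iff_test S hdense hskew _ _).1 (h n) z).symm

theorem mem_kerSub_iff_graph {H : Type*} [NormedAddCommGroup H] [InnerProductSpace ℂ H]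
    (S : H →ₗ.[ℂ] H) (y : H) : y ∈ kerSub S ↔ (y, (0 : H)) ∈ S.graph := by
  rw [LinearPMap.mem_graph_iff]
  constructor
  · rintro ⟨z, hz, rfl⟩
    exact ⟨z, rfl, hz⟩
  · rintro ⟨z, hz, h⟩
    exact ⟨z, h, hz⟩

theorem mem_ranSub_iff_graph {H : Type*} [NormedAddCommGroup H] [InnerProductSpace ℂ H]
    (S : H →ₗ.[ℂ] H) (w : H) : w ∈ ranSub S ↔ ∃ x, (x, w) ∈ S.graph := by
  constructor
  · rintro ⟨z, rfl⟩
    exact ⟨z, S.mem_graph z⟩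
  · rintro ⟨x, h⟩
    obtain ⟨z, _, h⟩ := (LinearPMap.mem_graph_iff _).1 h
    exact ⟨z, h⟩

theorem kerSub_eq_orthogonal {H : Type*} [NormedAddCommGroup H] [InnerProductSpace ℂ H]
    [CompleteSpace H] (S : H →ₗ.[ℂ] H)
    (hdense : Dense (S.domain : Set H)) (hskew : S.adjoint = -S) :
    kerSub S = (ranSub S)ᗮ := by
  ext y
  rw [mem_kerSub_iff_graph, mem_graph_iff_test S hdense hskew, Submodule.mem_orthogonal']
  constructor
  · rintro h _ ⟨z, rfl⟩
    have := h z
    rw [inner_zero_left, eq_comm, neg_eq_zero] at this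
    exact this
  · intro h z
    rw [inner_zero_left, eq_comm, neg_eq_zero]
    exact h _ ⟨z, rfl⟩

/-- if `S` is a densely defined skew-selfadjoint operator on a complex Hilbert
space `H` with compact embedding `dom S ↪ H`, then `ran S` is closed and
`H = ran S ⊕ ker S` orthogonally. -/
theorem closedRange_and_helmholtz {H : Type*} [NormedAddCommGroup H] [InnerProductSpace ℂ H]
    [CompleteSpace H] (S : H →ₗ.[ℂ] H)
    (hdense : Dense (S.domain : Set H)) (hskew : S.adjoint = -S)
    (hcomp : ∀ (x : ℕ → H) (hx : ∀ n, x n ∈ S.domain),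
      (∃ C, ∀ n, ‖x n‖ ≤ C) → (∃ C, ∀ n, ‖S ⟨x n, hx n⟩‖ ≤ C) →
      ∃ φ : ℕ → ℕ, StrictMono φ ∧
        ∃ l : H, Filter.Tendsto (fun n => x (φ n)) Filter.atTop (nhds l)) :
    IsClosed (ranSub S : Set H) ∧
      (∀ u ∈ ranSub S, ∀ v ∈ kerSub S, ⟪u, v⟫ = 0) ∧
      ranSub S ⊔ kerSub S = ⊤ := by
  have hK := kerSub_eq_orthogonal S hdense hskew
  -- Poincare inequality
  have hP : ∃ c : ℕ, ∀ x w, (x, w) ∈ S.graph → x ∈ (kerSub S)ᗮ → ‖x‖ ≤ c * ‖w‖ := by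
    by_contra! hcon
    choose x w hg hx hlt using hcon
    have hpos : ∀ n, 0 < ‖x n‖ := fun n => lt_of_le_of_lt (by positivity) (hlt n)
    let a : ℕ → ℂ := fun n => ((‖x n‖⁻¹ : ℝ) : ℂ)
    have ha : ∀ n, ‖a n‖ = ‖x n‖⁻¹ := fun n => by
      simp [a]
    have hg' : ∀ n, (a n • x n, a n • w n) ∈ S.graph := fun n => S.graph.smul_mem (a n) (hg n)
    have hn1 : ∀ n, ‖a n • x n‖ = 1 := fun n => by
      rw [norm_smul, ha, inv_mul_cancel₀ (hpos n).ne']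
    have hw1 : ∀ n : ℕ, n * ‖a n • w n‖ ≤ 1 := fun n => by
      rw [norm_smul, ha, mul_left_comm, inv_mul_le_iff₀ (hpos n), mul_one]
      exact (hlt n).le
    have hd : ∀ n, a (n + 1) • x (n + 1) ∈ S.domain := fun n =>
      LinearPMap.mem_domain_of_mem_graph (hg' (n + 1))
    have hSv : ∀ n, S ⟨_, hd n⟩ = a (n + 1) • w (n + 1) := fun n => by
      have := (LinearPMap.image_iff (hd n)).2 (hg' (n + 1))
      exact this.symm
    have hw2 : ∀ n : ℕ, ‖a (n + 1) • w (n + 1)‖ ≤ 1 / ((n : ℝ) + 1) := fun n => by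
      rw [le_div_iff₀ (by positivity), mul_comm]
      exact_mod_cast hw1 (n + 1)
    obtain ⟨φ, hφ, l, hl⟩ := hcomp (fun n => a (n + 1) • x (n + 1)) hd
      ⟨1, fun n => (hn1 _).le⟩ ⟨1, fun n => by
        rw [hSv]
        refine (hw2 n).trans ?_
        rw [div_le_one (by positivity)]
        linarith [(Nat.cast_nonneg n : (0 : ℝ) ≤ n)]⟩
    have hw0 : Filter.Tendsto (fun n => a (n + 1) • w (n + 1)) Filter.atTop (nhds 0) :=
      squeeze_zero_norm hw2 tendsto_one_div_add_atTop_nhds_zero_nat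
    have hlK : l ∈ kerSub S := by
      rw [mem_kerSub_iff_graph]
      exact graph_closed_aux S hdense hskew _ _ l 0 (fun n => hg' (φ n + 1)) hl
        (hw0.comp hφ.tendsto_atTop)
    have hlO : l ∈ (kerSub S)ᗮ :=
      (Submodule.isClosed_orthogonal (kerSub S)).mem_of_tendsto hl
        (Filter.Eventually.of_forall fun n => (kerSub S)ᗮ.smul_mem _ (hx _))
    have hl0 : l = 0 := by
      have := Submodule.inner_right_of_mem_orthogonal hlK hlO
      exact inner_self_eq_zero.1 this
    have hl1 : ‖l‖ = 1 :=
      tendsto_nhds_unique hl.norm (tendsto_const_nhds.congr fun n => (hn1 _).symm)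
    rw [hl0, norm_zero] at hl1
    exact zero_ne_one hl1
  obtain ⟨c, hc⟩ := hP
  have hKcl : IsClosed (kerSub S : Set H) := by
    rw [hK]; exact Submodule.isClosed_orthogonal _
  haveI : CompleteSpace (kerSub S) := hKcl.completeSpace_coe
  have hpre : ∀ w ∈ ranSub S, ∃ x ∈ (kerSub S)ᗮ, (x, w) ∈ S.graph := by
    intro w hw
    obtain ⟨x, hx⟩ := (mem_ranSub_iff_graph S w).1 hw
    obtain ⟨k, hk, z, hz, rfl⟩ := (kerSub S).exists_add_mem_mem_orthogonal x
    refine ⟨z, hz, ?_⟩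
    have := S.graph.sub_mem hx ((mem_kerSub_iff_graph S k).1 hk)
    simpa using this
  have hcl : IsClosed (ranSub S : Set H) := by
    rw [← isSeqClosed_iff_isClosed]
    intro w m hw hm
    choose x hxO hxg using fun n => hpre (w n) (hw n)
    have hcau : CauchySeq x := by
      have hwc := hm.cauchySeq
      rw [Metric.cauchySeq_iff] at hwc ⊢
      intro ε hε
      obtain ⟨N, hN⟩ := hwc (ε / (c + 1)) (by positivity)
      refine ⟨N, fun i hi j hj => ?_⟩
      have h1 := hN i hi j hj
      rw [dist_eq_norm] at h1 ⊢
      rw [lt_div_iff₀ (by positivity)] at h1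
      have h2 := hc (x i - x j) (w i - w j) (S.graph.sub_mem (hxg i) (hxg j))
        ((kerSub S)ᗮ.sub_mem (hxO i) (hxO j))
      nlinarith [norm_nonneg (w i - w j)]
    obtain ⟨l, hl⟩ := cauchySeq_tendsto_of_complete hcau
    exact (mem_ranSub_iff_graph S m).2 ⟨l, graph_closed_aux S hdense hskew x w l m hxg hl hm⟩
  refine ⟨hcl, ?_, ?_⟩
  · intro u hu v hv
    rw [hK] at hv
    exact Submodule.inner_right_of_mem_orthogonal hu hv
  · haveI : CompleteSpace (ranSub S) := hcl.completeSpace_coe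
    rw [hK]
    exact Submodule.sup_orthogonal_of_hasOrthogonalProjection
end
end

section
/- Friedrichs/Poincaré-type inequality: Let H be a complex Hilbert space and S : dom(S) ⊆ H → H a densely defined skew-selfadjoint operator such that the embedding dom(S) ↪ H is compact, i.e. every sequence (xₙ) in dom(S) with (‖xₙ‖) and (‖S xₙ‖) bounded has a subsequence converging in H. Then there exists a constant c > 0 such that for all x ∈ dom(S) ∩ ker(S)^⊥ one has ‖x‖_H ≤ c ‖S x‖_H. -/
noncomputable section

open LinearPMap
open scoped ComplexInnerProductSpace

/-- Friedrichs/Poincaré-type inequality: if `S` is a densely defined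
skew-selfadjoint operator on a complex Hilbert space `H` with compact embedding `dom S ↪ H`,
then there is `c > 0` with `‖x‖ ≤ c * ‖S x‖` for all `x ∈ dom S ∩ (ker S)ᗮ`. -/
theorem friedrichs_poincare_type {H : Type*} [NormedAddCommGroup H] [InnerProductSpace ℂ H]
    [CompleteSpace H] (S : H →ₗ.[ℂ] H)
    (hdense : Dense (S.domain : Set H)) (hskew : S.adjoint = -S)
    (hcomp : ∀ (x : ℕ → H) (hx : ∀ n, x n ∈ S.domain),
      (∃ C, ∀ n, ‖x n‖ ≤ C) → (∃ C, ∀ n, ‖S ⟨x n, hx n⟩‖ ≤ C) →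
      ∃ φ : ℕ → ℕ, StrictMono φ ∧
        ∃ l : H, Filter.Tendsto (fun n => x (φ n)) Filter.atTop (nhds l)) :
    ∃ c : ℝ, 0 < c ∧ ∀ (x : H) (hx : x ∈ S.domain), x ∈ (kerSub S)ᗮ →
      ‖x‖ ≤ c * ‖S ⟨x, hx⟩‖ := by
  by_contra hcon
  push Not at hcon
  have h1 : ∀ n : ℕ, ∃ y : H, ∃ hy : y ∈ S.domain, y ∈ (kerSub S)ᗮ ∧ ‖y‖ = 1 ∧
      ‖S ⟨y, hy⟩‖ ≤ 1 / ((n : ℝ) + 1) := by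
    intro n
    have hn : (0 : ℝ) < (n : ℝ) + 1 := by positivity
    obtain ⟨x, hx, hxk, hlt⟩ := hcon ((n : ℝ) + 1) hn
    have hpos : 0 < ‖x‖ := lt_of_le_of_lt (by positivity) hlt
    have hnorm : ‖((‖x‖⁻¹ : ℝ) : ℂ)‖ = ‖x‖⁻¹ := by simp
    refine ⟨((‖x‖⁻¹ : ℝ) : ℂ) • x, S.domain.smul_mem _ hx, Submodule.smul_mem _ _ hxk, ?_, ?_⟩
    · rw [norm_smul, hnorm, inv_mul_cancel₀ hpos.ne']
    · have he : S ⟨((‖x‖⁻¹ : ℝ) : ℂ) • x, S.domain.smul_mem _ hx⟩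
          = ((‖x‖⁻¹ : ℝ) : ℂ) • S ⟨x, hx⟩ := S.map_smul _ ⟨x, hx⟩
      rw [he, norm_smul, hnorm, le_div_iff₀ hn, inv_mul_eq_div, div_mul_eq_mul_div,
        div_le_one hpos]
      linarith
  choose y hy hyk hy1 hyS using h1
  obtain ⟨φ, hφ, l, hl⟩ := hcomp y hy ⟨1, fun n => (hy1 n).le⟩ ⟨1, fun n => (hyS n).trans (by
    rw [div_le_one (by positivity)]
    linarith [Nat.cast_nonneg (α := ℝ) n])⟩
  have hS0 : Filter.Tendsto (fun n => S ⟨y n, hy n⟩) Filter.atTop (nhds 0) :=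
    squeeze_zero_norm hyS tendsto_one_div_add_atTop_nhds_zero_nat
  have hlk : l ∈ (kerSub S)ᗮ :=
    (Submodule.isClosed_orthogonal (kerSub S)).mem_of_tendsto hl
      (Filter.Eventually.of_forall fun n => hyk (φ n))
  have hl1 : ‖l‖ = 1 := by
    refine tendsto_nhds_unique hl.norm ?_
    simp [hy1]
  have hcl : (-S).IsClosed := hskew ▸ LinearPMap.adjoint_isClosed hdense
  have hmem : ((l, (0 : H)) : H × H) ∈ (-S).graph := by
    have ht : Filter.Tendsto (fun n => ((y (φ n), -S ⟨y (φ n), hy (φ n)⟩) : H × H))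
        Filter.atTop (nhds (l, 0)) := by
      have := (hS0.comp hφ.tendsto_atTop).neg
      rw [neg_zero] at this
      exact hl.prodMk_nhds this
    refine IsClosed.mem_of_tendsto hcl ht (Filter.Eventually.of_forall fun n => ?_)
    exact (LinearPMap.mem_graph_iff (-S)).2 ⟨⟨y (φ n), hy (φ n)⟩, rfl, rfl⟩
  obtain ⟨z, hz, hz0⟩ := (LinearPMap.mem_graph_iff (-S)).1 hmem
  have hker : l ∈ kerSub S := by
    refine ⟨z, ?_, hz⟩
    have : -(S z) = 0 := hz0
    exact neg_eq_zero.1 this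
  have h0 : l = 0 := by
    have := (Submodule.mem_orthogonal _ _).1 hlk l hker
    exact inner_self_eq_zero.1 this
  rw [h0, norm_zero] at hl1
  exact zero_ne_one hl1
end
end

section
/- Let H be a complex Hilbert space and S : dom(S) ⊆ H → H a densely defined skew-selfadjoint operator such that the embedding dom(S) ↪ H is compact (every sequence (xₙ) in dom(S) with (‖xₙ‖) and (‖S xₙ‖) bounded has a subsequence converging in H). Then the reduced operator Ŝ : dom(S) ∩ ker(S)^⊥ → ran(S), x ↦ S x, is a bijection whose inverse Ŝ⁻¹ : ran(S) → H is a compact (bounded) operator; equivalently, for every bounded sequence (yₙ) in ran(S), the unique solutions xₙ ∈ dom(S) ∩ ker(S)^⊥ of S xₙ = yₙ possess a subsequence converging in H. -/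
noncomputable section

open LinearPMap
open scoped ComplexInnerProductSpace

/-- A skew-selfadjoint operator is closed. -/
lemma skew_closed {H : Type*} [NormedAddCommGroup H] [InnerProductSpace ℂ H]
    [CompleteSpace H] (S : H →ₗ.[ℂ] H)
    (hdense : Dense (S.domain : Set H)) (hskew : S.adjoint = -S) :
    IsClosed (S.graph : Set (H × H)) := by
  have h1 : IsClosed (S.adjoint.graph : Set (H × H)) := adjoint_isClosed hdense
  have h2 : (S.graph : Set (H × H)) = (fun p : H × H => (p.1, -p.2)) ⁻¹' S.adjoint.graph := by
    ext ⟨a, b⟩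
    rw [hskew]
    simp only [Set.mem_preimage, SetLike.mem_coe, LinearPMap.mem_graph_iff]
    constructor
    · rintro ⟨y, h, h'⟩
      exact ⟨y, h, by simp only [LinearPMap.neg_apply]; rw [h']⟩
    · rintro ⟨y, h, h'⟩
      refine ⟨y, h, ?_⟩
      simp only [LinearPMap.neg_apply] at h'
      exact neg_injective h'
  rw [h2]
  exact h1.preimage (by fun_prop)

lemma mem_kerSub_iff {H : Type*} [NormedAddCommGroup H] [InnerProductSpace ℂ H]
    (S : H →ₗ.[ℂ] H) (x : H) : x ∈ kerSub S ↔ (x, (0 : H)) ∈ S.graph := by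
  rw [LinearPMap.mem_graph_iff]
  simp only [kerSub, Submodule.mem_map, LinearMap.mem_ker]
  constructor
  · rintro ⟨y, h, h'⟩
    exact ⟨y, h', h⟩
  · rintro ⟨y, h, h'⟩
    exact ⟨y, h', h⟩

/-- if `S` is a densely defined skew-selfadjoint operator on a complex Hilbert
space `H` with compact embedding `dom S ↪ H`, then the reduced operator
`Ŝ : dom S ∩ (ker S)ᗮ → ran S`, `x ↦ S x`, is a bijection whose inverse is compact: for every
bounded sequence `yₙ` in `ran S` the unique solutions `xₙ ∈ dom S ∩ (ker S)ᗮ` of `S xₙ = yₙ`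
possess a subsequence converging in `H`. -/
theorem reduced_operator_bijective_compact_inverse {H : Type*} [NormedAddCommGroup H] [InnerProductSpace ℂ H]
    [CompleteSpace H] (S : H →ₗ.[ℂ] H)
    (hdense : Dense (S.domain : Set H)) (hskew : S.adjoint = -S)
    (hcomp : ∀ (x : ℕ → H) (hx : ∀ n, x n ∈ S.domain),
      (∃ C, ∀ n, ‖x n‖ ≤ C) → (∃ C, ∀ n, ‖S ⟨x n, hx n⟩‖ ≤ C) →
      ∃ φ : ℕ → ℕ, StrictMono φ ∧
        ∃ l : H, Filter.Tendsto (fun n => x (φ n)) Filter.atTop (nhds l)) :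
    (∀ y ∈ ranSub S, ∃ (x : S.domain), (x : H) ∈ (kerSub S)ᗮ ∧ S x = y ∧
        ∀ (x' : S.domain), (x' : H) ∈ (kerSub S)ᗮ → S x' = y → (x' : H) = (x : H)) ∧
      (∀ (y : ℕ → H), (∀ n, y n ∈ ranSub S) → (∃ C, ∀ n, ‖y n‖ ≤ C) →
        ∀ (x : ℕ → S.domain), (∀ n, ((x n : H) ∈ (kerSub S)ᗮ ∧ S (x n) = y n)) →
          ∃ φ : ℕ → ℕ, StrictMono φ ∧
            ∃ l : H, Filter.Tendsto (fun n => (x (φ n) : H)) Filter.atTop (nhds l)) := by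
  have hcl := skew_closed S hdense hskew
  have hK : IsClosed (kerSub S : Set H) := by
    have : (kerSub S : Set H) = (fun x : H => (x, (0 : H))) ⁻¹' S.graph := by
      ext x
      exact mem_kerSub_iff S x
    rw [this]
    exact hcl.preimage (by fun_prop)
  have hzero : ∀ x : H, x ∈ kerSub S → x ∈ (kerSub S)ᗮ → x = 0 := fun x h h' =>
    inner_self_eq_zero.1 (h' x h)
  have hbound : ∃ c : ℕ, ∀ x : S.domain, (x : H) ∈ (kerSub S)ᗮ → ‖(x : H)‖ ≤ c * ‖S x‖ := by
    by_contra! hcon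
    choose x hx hlt using hcon
    have hpos : ∀ n, 0 < ‖(x n : H)‖ := fun n => lt_of_le_of_lt (by positivity) (hlt n)
    let z : ℕ → S.domain := fun n => ((‖(x n : H)‖⁻¹ : ℝ) : ℂ) • x n
    have hz1 : ∀ n, ‖(z n : H)‖ = 1 := by
      intro n
      have := hpos n
      simp only [z, Submodule.coe_smul, norm_smul, Complex.norm_real, norm_inv, norm_norm]
      exact inv_mul_cancel₀ this.ne'
    have hzS : ∀ n, n * ‖S (z n)‖ ≤ 1 := by
      intro n
      have := hpos n
      have h2 : ‖S (z n)‖ = ‖(x n : H)‖⁻¹ * ‖S (x n)‖ := by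
        simp only [z, LinearPMap.map_smul, norm_smul, Complex.norm_real, norm_inv, norm_norm]
      rw [h2]
      calc n * (‖(x n : H)‖⁻¹ * ‖S (x n)‖) = ‖(x n : H)‖⁻¹ * (n * ‖S (x n)‖) := by ring
        _ ≤ ‖(x n : H)‖⁻¹ * ‖(x n : H)‖ := by gcongr; exact (hlt n).le
        _ = 1 := inv_mul_cancel₀ this.ne'
    have hzK : ∀ n, (z n : H) ∈ (kerSub S)ᗮ := fun n => Submodule.smul_mem _ _ (hx n)
    have hle : ∀ n : ℕ, ‖S (z (n + 1))‖ ≤ 1 / ((n : ℝ) + 1) := by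
      intro n
      have := hzS (n + 1)
      push_cast at this
      rw [le_div_iff₀ (by positivity)]
      linarith
    have hlim : Filter.Tendsto (fun n => S (z (n + 1))) Filter.atTop (nhds 0) :=
      squeeze_zero_norm hle tendsto_one_div_add_atTop_nhds_zero_nat
    obtain ⟨φ, hφ, l, hl⟩ := hcomp (fun n => z (n + 1)) (fun n => (z (n + 1)).2)
      ⟨1, fun n => (hz1 _).le⟩ ⟨1, fun n => (hle n).trans (by
        rw [div_le_one (by positivity)]
        have : (0 : ℝ) ≤ n := n.cast_nonneg
        linarith)⟩
    have hlS := hlim.comp hφ.tendsto_atTop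
    have hmem : (l, (0 : H)) ∈ S.graph :=
      hcl.mem_of_tendsto (hl.prodMk_nhds hlS)
        (Filter.Eventually.of_forall fun n => S.mem_graph (z (φ n + 1)))
    have hl' : l ∈ (kerSub S)ᗮ :=
      (Submodule.isClosed_orthogonal _).mem_of_tendsto hl
        (Filter.Eventually.of_forall fun n => hzK _)
    have hl0 := hzero l ((mem_kerSub_iff S l).2 hmem) hl'
    have hn : ‖l‖ = 1 := by
      refine tendsto_nhds_unique hl.norm ?_
      simp only [hz1]
      exact tendsto_const_nhds
    rw [hl0, norm_zero] at hn
    exact zero_ne_one hn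
  obtain ⟨c, hc⟩ := hbound
  refine ⟨?_, ?_⟩
  · rintro y ⟨x, hxy⟩
    haveI : CompleteSpace (kerSub S) := hK.completeSpace_coe
    obtain ⟨k, hk, hk'⟩ : ∃ k ∈ kerSub S, (x : H) - k ∈ (kerSub S)ᗮ :=
      ⟨_, Submodule.starProjection_apply_mem (kerSub S) (x : H),
        Submodule.sub_starProjection_mem_orthogonal _⟩
    obtain ⟨k', hk0, rfl⟩ := hk
    have hk0' : S k' = 0 := hk0
    have hS : S (x - k') = y := by
      rw [LinearPMap.map_sub, hk0', sub_zero]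
      exact hxy
    refine ⟨x - k', hk', hS, ?_⟩
    intro x' hx' hy
    have h := hc (x' - (x - k')) (Submodule.sub_mem _ hx' hk')
    rw [LinearPMap.map_sub, hy, hS, sub_self, norm_zero, mul_zero] at h
    have h0 := norm_le_zero_iff.1 h
    exact sub_eq_zero.1 h0
  · rintro y - ⟨C, hC⟩ x hx
    refine hcomp (fun n => x n) (fun n => (x n).2) ⟨c * C, fun n => ?_⟩ ⟨C, fun n => ?_⟩
    · refine (hc (x n) (hx n).1).trans ?_
      rw [(hx n).2]
      gcongr
      exact hC n
    · change ‖S (x n)‖ ≤ C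
      rw [(hx n).2]
      exact hC n
end
end

section
/- Inverse factorization: Let R be a (possibly noncommutative) ring, let s₁, …, s_N ∈ R satisfy s_k s_ℓ = 0 for all k ≠ ℓ, and let t ∈ R commute with each s_k. Assume t is a unit and each t + s_k is a unit, k = 1, …, N. Then t + s₁ + ⋯ + s_N is a unit and (t + s₁ + ⋯ + s_N)⁻¹ = t^{N−1} · ∏_{k=1}^{N} (t + s_k)⁻¹. -/
theorem inverse_factorization_aux {R : Type*} [Ring R] (n : ℕ) :
    ∀ (s : Fin (n + 1) → R) (t : R)
    (_ : ∀ k ℓ : Fin (n + 1), k ≠ ℓ → s k * s ℓ = 0)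
    (_ : ∀ k : Fin (n + 1), Commute t (s k))
    (_ : IsUnit t) (_ : ∀ k : Fin (n + 1), IsUnit (t + s k)),
    IsUnit (t + ∑ k, s k) ∧
      Ring.inverse (t + ∑ k, s k) =
        t ^ n * (List.ofFn fun k : Fin (n + 1) => Ring.inverse (t + s k)).prod := by
  induction n with
  | zero =>
    intro s t _ _ _ hu
    simpa using hu 0
  | succ n ih =>
    intro s t hann hcomm ht hu
    obtain ⟨hA, hI⟩ := ih (fun k => s k.succ) t
      (fun k l h => hann _ _ (fun h' => h (Fin.succ_injective _ h')))
      (fun k => hcomm _) ht (fun k => hu _)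
    rw [Fin.sum_univ_succ, List.ofFn_succ, List.prod_cons]
    have hS : (∑ k : Fin (n + 1), s k.succ) * s 0 = 0 := by
      rw [Finset.sum_mul]
      exact Finset.sum_eq_zero fun k _ => hann _ _ (Fin.succ_ne_zero k)
    have hc0 : t * s 0 = s 0 * t := hcomm 0
    have hB := hu 0
    generalize (∑ k : Fin (n + 1), s k.succ) = S at *
    generalize (List.ofFn fun k : Fin (n + 1) => Ring.inverse (t + s k.succ)).prod = P at *
    have key : (t + (s 0 + S)) * t = (t + S) * (t + s 0) := by
      simp only [add_mul, mul_add, hS, hc0]; abel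
    have hBt : Commute (t + s 0) t := (Commute.refl t).add_left (hcomm 0).symm
    generalize t + (s 0 + S) = C at *
    generalize t + s 0 = B at *
    generalize t + S = A at *
    obtain ⟨a, rfl⟩ := hA
    obtain ⟨b, rfl⟩ := hB
    obtain ⟨t, rfl⟩ := ht
    have hC : C = ((a * b * t⁻¹ : Rˣ) : R) := by
      push_cast
      rw [← key, mul_assoc, Units.mul_inv, mul_one]
    refine ⟨hC ▸ Units.isUnit _, ?_⟩
    rw [hC, Ring.inverse_unit, Ring.inverse_unit]
    rw [Ring.inverse_unit] at hI
    have hc : Commute ((b⁻¹ : Rˣ) : R) ((t : R) ^ n) := (hBt.units_inv_left).pow_right n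
    rw [mul_inv_rev, mul_inv_rev, inv_inv]
    push_cast
    rw [hI, ← mul_assoc (↑b⁻¹ : R), hc.eq, pow_succ']
    simp only [mul_assoc]

/-- inverse factorization: in a (possibly noncommutative) ring `R`, if
`s 0, …, s (N-1)` pairwise annihilate, `t` commutes with each `s k`, `t` is a unit and each
`t + s k` is a unit, then `t + ∑ k, s k` is a unit and
`(t + ∑ k, s k)⁻¹ = t ^ (N - 1) * ∏ k, (t + s k)⁻¹`. -/
theorem inverse_factorization {R : Type*} [Ring R] {N : ℕ} (hN : 0 < N)
    (s : Fin N → R) (t : R)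
    (hann : ∀ k ℓ : Fin N, k ≠ ℓ → s k * s ℓ = 0)
    (hcomm : ∀ k : Fin N, Commute t (s k))
    (ht : IsUnit t) (hu : ∀ k : Fin N, IsUnit (t + s k)) :
    IsUnit (t + ∑ k, s k) ∧
      Ring.inverse (t + ∑ k, s k) =
        t ^ (N - 1) * (List.ofFn fun k : Fin N => Ring.inverse (t + s k)).prod := by
  obtain ⟨n, rfl⟩ : ∃ n, N = n + 1 := ⟨N - 1, by omega⟩
  exact inverse_factorization_aux n s t hann hcomm ht hu
end

section
/- Single-factor recovery: Let R be a (possibly noncommutative) ring, let s₁, …, s_N ∈ R satisfy s_k s_ℓ = 0 for all k ≠ ℓ, let t ∈ R be a unit commuting with each s_k, and set s := s₁ + ⋯ + s_N. Assume each 1 + t⁻¹ s_k is a unit, k = 1, …, N. Then for each ℓ ∈ {1, …, N}: t + s_ℓ = (∏_{ℓ ≠ k} (1 + t⁻¹ s_k)⁻¹) · (t + s), and if in addition t + s is a unit then t + s_ℓ is a unit with (t + s_ℓ)⁻¹ = (t + s)⁻¹ · ∏_{ℓ ≠ k} (1 + t⁻¹ s_k). -/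
theorem ofFn_one_add_prod {R : Type*} [Ring R] : ∀ {N : ℕ} (b : Fin N → R),
    (∀ k l, k ≠ l → b k * b l = 0) →
    (List.ofFn fun k => 1 + b k).prod = 1 + ∑ k, b k
  | 0, _, _ => by simp
  | n + 1, b, h => by
    have ih := ofFn_one_add_prod (fun k : Fin n => b k.succ)
      (fun k l hkl => h _ _ (fun e => hkl (Fin.succ_injective _ e)))
    have h0 : b 0 * ∑ k : Fin n, b k.succ = 0 := by
      rw [Finset.mul_sum]
      exact Finset.sum_eq_zero fun k _ => h _ _ (Fin.succ_ne_zero k).symm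
    rw [List.ofFn_succ, List.prod_cons, ih, Fin.sum_univ_succ, add_mul, mul_add, mul_add, h0]
    simp only [one_mul, mul_one, add_zero]
    abel

theorem ofFn_inverse_prod_mul {R : Type*} [Ring R] : ∀ {N : ℕ} (u : Fin N → R),
    (∀ k, IsUnit (u k)) → (∀ k l, Commute (u k) (u l)) →
    (List.ofFn fun k => Ring.inverse (u k)).prod * (List.ofFn u).prod = 1
  | 0, _, _, _ => by simp
  | n + 1, u, hu, hc => by
    have ih := ofFn_inverse_prod_mul (fun k : Fin n => u k.succ)
      (fun k => hu _) (fun k l => hc _ _)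
    have h0 : Commute (u 0) (List.ofFn fun k : Fin n => u k.succ).prod := by
      apply Commute.list_prod_right
      intro x hx
      obtain ⟨k, rfl⟩ := (List.mem_ofFn' _ _).1 hx
      exact hc _ _
    rw [List.ofFn_succ, List.prod_cons, List.ofFn_succ, List.prod_cons, h0.eq, mul_assoc,
      ← mul_assoc (List.prod _) (List.prod _), ih, one_mul, Ring.inverse_mul_cancel _ (hu 0)]

/-- single-factor recovery: in a (possibly noncommutative) ring `R`, if
`s 0, …, s (N-1)` pairwise annihilate, `t` is a unit commuting with each `s k`, `s := ∑ k, s k`,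
and each `1 + t⁻¹ * s k` is a unit, then for every `ℓ`:
`t + s ℓ = (∏_{k ≠ ℓ} (1 + t⁻¹ * s k)⁻¹) * (t + s)` (the product over `k ≠ ℓ` being taken in
increasing order of `k`, encoded by replacing the `ℓ`-th factor by `1`), and if moreover
`t + s` is a unit then `t + s ℓ` is a unit with
`(t + s ℓ)⁻¹ = (t + s)⁻¹ * ∏_{k ≠ ℓ} (1 + t⁻¹ * s k)`. -/
theorem single_factor_recovery {R : Type*} [Ring R] {N : ℕ}
    (s : Fin N → R) (t : R)
    (hann : ∀ k ℓ : Fin N, k ≠ ℓ → s k * s ℓ = 0)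
    (hcomm : ∀ k : Fin N, Commute t (s k))
    (ht : IsUnit t)
    (hu : ∀ k : Fin N, IsUnit (1 + Ring.inverse t * s k)) :
    ∀ ℓ : Fin N,
      t + s ℓ =
        (List.ofFn fun k : Fin N =>
          if k = ℓ then 1 else Ring.inverse (1 + Ring.inverse t * s k)).prod * (t + ∑ k, s k) ∧
      (IsUnit (t + ∑ k, s k) →
        IsUnit (t + s ℓ) ∧
          Ring.inverse (t + s ℓ) =
            Ring.inverse (t + ∑ k, s k) *
              (List.ofFn fun k : Fin N =>
                if k = ℓ then 1 else 1 + Ring.inverse t * s k).prod) := by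
  intro ℓ
  have hti : ∀ k, Commute (Ring.inverse t) (s k) := by
    intro k
    obtain ⟨v, rfl⟩ := ht
    rw [Ring.inverse_unit]
    exact (hcomm k).units_inv_left
  have hta : ∀ k, t * (Ring.inverse t * s k) = s k := fun k => by
    rw [← mul_assoc, Ring.mul_inverse_cancel _ ht, one_mul]
  have haa : ∀ k l, k ≠ l → (Ring.inverse t * s k) * (Ring.inverse t * s l) = 0 := by
    intro k l hkl
    rw [mul_assoc, ← mul_assoc (s k), ← (hti k).eq, mul_assoc, hann k l hkl, mul_zero, mul_zero]
  set a : Fin N → R := fun k => Ring.inverse t * s k with ha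
  set b : Fin N → R := fun k => if k = ℓ then 0 else a k with hb
  have hbb : ∀ k l, k ≠ l → b k * b l = 0 := by
    intro k l hkl
    simp only [hb]
    split_ifs
    · simp
    · simp
    · simp
    · exact haa k l hkl
  have hf : (fun k : Fin N => if k = ℓ then 1 else 1 + Ring.inverse t * s k)
      = fun k => 1 + b k := by
    funext k
    simp only [hb, ha]
    split_ifs <;> simp
  have hg : (fun k : Fin N => if k = ℓ then 1 else Ring.inverse (1 + Ring.inverse t * s k))
      = fun k => Ring.inverse (1 + b k) := by
    funext k
    simp only [hb, ha]
    split_ifs <;> simp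
  have hub : ∀ k, IsUnit (1 + b k) := by
    intro k
    simp only [hb]
    split_ifs
    · simp
    · exact hu k
  have hbc : ∀ k l, Commute (1 + b k) (1 + b l) := by
    intro k l
    rcases eq_or_ne k l with rfl | hkl
    · exact Commute.refl _
    · have : Commute (b k) (b l) := (hbb k l hkl).trans (hbb l k hkl.symm).symm
      exact ((Commute.one_left _).add_left ((Commute.one_right _).add_right this))
  rw [hf, hg]
  have hQP := ofFn_inverse_prod_mul (fun k => 1 + b k) hub hbc
  have hP := ofFn_one_add_prod b hbb
  have hPu : IsUnit (List.ofFn fun k => 1 + b k).prod := by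
    apply List.prod_isUnit
    intro x hx
    obtain ⟨k, rfl⟩ := (List.mem_ofFn' _ _).1 hx
    exact hub k
  have hbt : (∑ k, b k) * t + s ℓ = ∑ k, s k := by
    rw [Finset.sum_mul, ← Finset.sum_erase_add _ _ (Finset.mem_univ ℓ),
      ← Finset.sum_erase_add _ s (Finset.mem_univ ℓ)]
    have : b ℓ * t = 0 := by simp [hb]
    rw [this, add_zero]
    congr 1
    refine Finset.sum_congr rfl fun k hk => ?_
    have hk' := Finset.ne_of_mem_erase hk
    simp only [hb, if_neg hk', ha]
    rw [mul_assoc, ← (hcomm k).eq, ← mul_assoc, Ring.inverse_mul_cancel _ ht, one_mul]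
  have hbs : (∑ k, b k) * s ℓ = 0 := by
    rw [Finset.sum_mul]
    refine Finset.sum_eq_zero fun k _ => ?_
    simp only [hb]
    split_ifs with h
    · simp
    · simp only [ha]
      rw [mul_assoc, hann k ℓ h, mul_zero]
  have key : (List.ofFn fun k => 1 + b k).prod * (t + s ℓ) = t + ∑ k, s k := by
    rw [hP, add_mul, mul_add (∑ k, b k), hbs, one_mul, ← hbt]
    abel
  refine ⟨by rw [← key, ← mul_assoc, hQP, one_mul], fun hts => ?_⟩
  have hul : IsUnit (t + s ℓ) := by
    rw [← key] at hts
    obtain ⟨p, hp⟩ := hPu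
    rw [← hp] at hts
    exact (Units.isUnit_units_mul p _).1 hts
  refine ⟨hul, ?_⟩
  apply hul.mul_right_cancel
  rw [Ring.inverse_mul_cancel _ hul, mul_assoc, key, Ring.inverse_mul_cancel _ hts]
end
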